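/- Let φ : ℤ → (0,∞) be a function such that for every t ∈ ℤ the series ∑_{j=-∞}^{t-1} φ(j)⁻¹ converges and φ(t)·∑_{j=-∞}^{t-1} φ(j)⁻¹ ≤ μ for some constant μ > 0. Then for any t₀ ∈ ℤ there exists a constant c > 0 (one may take c = μ·(∑_{j=-∞}^{t₀-1} φ(j)⁻¹)⁻¹) such that φ(t) ≤ c·(1 + μ⁻¹)^{t₀ - t} for all integers t ≥ t₀. -/

import Mathlib

/-!
Write `S t = ∑_{j < t} φ(j)⁻¹`. The bound `φ t * S t ≤ μ` says that the increment
`S (t + 1) - S t = φ(t)⁻¹` is at least `μ⁻¹ * S t`, so `S` grows at least like the powers of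
`1 + μ⁻¹`. Feeding this growth back into `φ t ≤ μ / S t` gives the decay of `φ`.
-/

section PastSum

variable {M : Type*} [AddCommMonoid M] [TopologicalSpace M] {f : ℤ → M} {t : ℤ}

/-- Convergence of the series `∑_{j < t} f j`, enumerated downwards from `j = t - 1`. -/
def PastSummable (f : ℤ → M) (t : ℤ) : Prop :=
  Summable fun n : ℕ => f (t - 1 - (n : ℤ))

/-- The sum `∑_{j < t} f j`, enumerated downwards from `j = t - 1`. As for `tsum`, the value is
meaningful only under `PastSummable f t`. -/
noncomputable def pastSum (f : ℤ → M) (t : ℤ) : M :=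
  ∑' n : ℕ, f (t - 1 - (n : ℤ))

theorem PastSummable.hasSum_pastSum (h : PastSummable f t) :
    HasSum (fun n : ℕ => f (t - 1 - (n : ℤ))) (pastSum f t) :=
  Summable.hasSum h

theorem PastSummable.hasSum_add_one [ContinuousAdd M] (h : PastSummable f t) :
    HasSum (fun n : ℕ => f (t + 1 - 1 - (n : ℤ))) (f t + pastSum f t) := by
  have shift (n : ℕ) : t + 1 - 1 - ((n + 1 : ℕ) : ℤ) = t - 1 - n := by lia
  have tail : HasSum (fun n : ℕ => f (t + 1 - 1 - ((n + 1 : ℕ) : ℤ))) (pastSum f t) := by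
    simpa only [shift] using h.hasSum_pastSum
  simpa only [Nat.cast_zero, sub_zero, add_sub_cancel_right] using
    HasSum.zero_add (f := fun n : ℕ => f (t + 1 - 1 - (n : ℤ))) tail

theorem PastSummable.add_one [ContinuousAdd M] (h : PastSummable f t) :
    PastSummable f (t + 1) :=
  h.hasSum_add_one.summable

theorem PastSummable.of_le [ContinuousAdd M] {t₀ : ℤ} (h : PastSummable f t₀) (ht : t₀ ≤ t) :
    PastSummable f t := by
  induction t, ht using Int.leInduction with
  | base => exact h
  | succ s _ ih => exact ih.add_one

theorem PastSummable.pastSum_add_one [ContinuousAdd M] [T2Space M] (h : PastSummable f t) :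
    pastSum f (t + 1) = f t + pastSum f t :=
  h.hasSum_add_one.tsum_eq

end PastSum

section OrderedField

variable {K : Type*} [Field K] [LinearOrder K] [IsStrictOrderedRing K]

theorem le_mul_zpow_sub_of_mul_le_add_one {a : ℤ → K} {r : K} {t₀ t : ℤ} (hr : 0 < r)
    (ha : ∀ s, t₀ ≤ s → a s * r ≤ a (s + 1)) (ht : t₀ ≤ t) :
    a t₀ ≤ a t * r ^ (t₀ - t) := by
  induction t, ht using Int.leInduction with
  | base => simp
  | succ s hs ih =>
    calc a t₀ ≤ a s * r ^ (t₀ - s) := ih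
      _ = a s * r * r ^ (t₀ - (s + 1)) := by
        rw [mul_assoc, ← zpow_one_add₀ hr.ne']
        congr 2
        ring
      _ ≤ a (s + 1) * r ^ (t₀ - (s + 1)) := by
        gcongr
        exact ha s hs

variable [TopologicalSpace K] [OrderTopology K] {f : ℤ → K} {t : ℤ}

theorem PastSummable.pastSum_pos (h : PastSummable f t) (hf : ∀ s, 0 < f s) :
    0 < pastSum f t :=
  h.tsum_pos (fun _ => (hf _).le) 0 (hf _)

theorem PastSummable.pastSum_mul_le_pastSum_add_one {μ : K} (h : PastSummable f t) (hμ : 0 < μ)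
    (hbd : pastSum f t ≤ μ * f t) :
    pastSum f t * (1 + μ⁻¹) ≤ pastSum f (t + 1) := by
  have increment : pastSum f t * μ⁻¹ ≤ f t := by
    rwa [← div_eq_mul_inv, div_le_iff₀' hμ]
  rw [h.pastSum_add_one]
  linarith

theorem stmt_0_general {φ : ℤ → K} {μ : K} {t₀ t : ℤ} (hφ : ∀ s, 0 < φ s)
    (hsum : PastSummable φ⁻¹ t₀) (hbd : ∀ s, t₀ ≤ s → φ s * pastSum φ⁻¹ s ≤ μ) (ht : t₀ ≤ t) :
    φ t ≤ μ * (pastSum φ⁻¹ t₀)⁻¹ * (1 + μ⁻¹) ^ (t₀ - t) := by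
  have hS : 0 < pastSum φ⁻¹ t₀ := hsum.pastSum_pos fun s => inv_pos.2 (hφ s)
  have hμ : 0 < μ := (mul_pos (hφ t₀) hS).trans_le (hbd t₀ le_rfl)
  have hr : 0 < 1 + μ⁻¹ := by positivity
  have growth : pastSum φ⁻¹ t₀ ≤ pastSum φ⁻¹ t * (1 + μ⁻¹) ^ (t₀ - t) :=
    le_mul_zpow_sub_of_mul_le_add_one hr (fun s hs =>
      (hsum.of_le hs).pastSum_mul_le_pastSum_add_one hμ
        ((le_mul_inv_iff₀' (hφ s)).2 (hbd s hs))) ht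
  have decay : φ t * pastSum φ⁻¹ t₀ ≤ μ * (1 + μ⁻¹) ^ (t₀ - t) :=
    calc φ t * pastSum φ⁻¹ t₀ ≤ φ t * (pastSum φ⁻¹ t * (1 + μ⁻¹) ^ (t₀ - t)) :=
          mul_le_mul_of_nonneg_left growth (hφ t).le
      _ = φ t * pastSum φ⁻¹ t * (1 + μ⁻¹) ^ (t₀ - t) := (mul_assoc _ _ _).symm
      _ ≤ μ * (1 + μ⁻¹) ^ (t₀ - t) :=
          mul_le_mul_of_nonneg_right (hbd t ht) (zpow_pos hr _).le
  rwa [mul_right_comm, le_mul_inv_iff₀ hS]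

end OrderedField

/-- If `φ : ℤ → (0,∞)` satisfies, for every `t`, the convergence of
`∑_{j=-∞}^{t-1} φ(j)⁻¹` (reindexed as `∑_{n∈ℕ} φ(t-1-n)⁻¹`) together with the bound
`φ(t) · ∑_{j=-∞}^{t-1} φ(j)⁻¹ ≤ μ`, then for any `t₀` there is `c > 0` with
`φ(t) ≤ c · (1+μ⁻¹)^{t₀-t}` for all `t ≥ t₀`. -/
theorem stmt_0 (φ : ℤ → ℝ) (hφ : ∀ t : ℤ, 0 < φ t) (μ : ℝ) (hμ : 0 < μ)
    (hsum : ∀ t : ℤ, Summable fun n : ℕ => (φ (t - 1 - (n : ℤ)))⁻¹)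
    (hbd : ∀ t : ℤ, φ t * ∑' n : ℕ, (φ (t - 1 - (n : ℤ)))⁻¹ ≤ μ)
    (t₀ : ℤ) :
    ∃ c : ℝ, 0 < c ∧ ∀ t : ℤ, t₀ ≤ t → φ t ≤ c * (1 + μ⁻¹) ^ (t₀ - t) := by
  have hS : 0 < pastSum φ⁻¹ t₀ := PastSummable.pastSum_pos (hsum t₀) fun s => inv_pos.2 (hφ s)
  exact ⟨μ * (pastSum φ⁻¹ t₀)⁻¹, by positivity,
    fun _ => stmt_0_general hφ (hsum t₀) fun s _ => hbd s⟩
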